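/- Let (Ω, ℱ, P) be a standard Borel probability space, J ∈ ℕ, and let T : Ω → {0,1,…,J} be a random treatment, Y₀, …, Y_J : Ω → ℝ the potential outcomes, X : Ω → ℝ^d a random covariate vector, and Y(ω) := Y_{T(ω)}(ω) the observed outcome. Assume: (i) for every j, T and Y_j are conditionally independent given σ(X) (unconfoundedness); (ii) for every j there is a measurable e_j : ℝ^d → (0,1] with e_j ∘ X a version of E[1{T=j} | σ(X)]. Define the stabilized weight π₀(ω) := Σ_{j=0}^J 1{T(ω)=j} · P(T=j)/e_j(X(ω)). Then for all bounded measurable functions ℓ₀, …, ℓ_J : ℝ → ℝ, E[ π₀ · ℓ_T(Y) ] = Σ_{j=0}^J P(T = j) · E[ ℓ_j(Y_j) ]. -/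

import Mathlib

/-!
Inverse-probability weighting turns the law of `Y j` on the event `{T = j}` back into the full law
of `Y j`: the measure with density `1{T = j} / e_j(X)` with respect to `P` is mapped by `Y j` to
the law of `Y j` under `P` (`map_withDensity_ipw`). On a measurable set `A` this is the chain
`E[1{T=j, Y_j∈A} / e_j(X)] = E[P(T=j, Y_j∈A | X) / e_j(X)] = E[P(Y_j∈A | X)] = P(Y_j∈A)`,
whose middle step is unconfoundedness. Since `1 / e_j(X)` may be unbounded, the chain is carried out
with Lebesgue integrals of `ℝ≥0∞`-valued functions, where pulling out an `X`-measurable factor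
needs no integrability (`lintegral_mul_condLExp`). Taking `A = ℝ` shows that the weights are
integrable, so the observed expectation splits over the treatment arms, each of which is an
integral of `ℓ j` against the law of `Y j`.
-/

open MeasureTheory ProbabilityTheory

/-- Pull-out property of the Lebesgue conditional expectation, in integrated form. -/
lemma lintegral_mul_condLExp {Ω : Type*} {m mΩ : MeasurableSpace Ω} (hm : m ≤ mΩ)
    (P : Measure Ω) [IsFiniteMeasure P] {f g : Ω → ENNReal}
    (hf : Measurable f) (hg : Measurable[m] g) :
    ∫⁻ ω, f ω * g ω ∂P = ∫⁻ ω, condLExp m P f ω * g ω ∂P := by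
  have hf' : Measurable (condLExp m P f) := measurable_condLExp' m P f
  -- The densities `f` and `condLExp m P f` give the same measure on the sub-σ-algebra `m`.
  have key : (P.withDensity f).trim hm = (P.withDensity (condLExp m P f)).trim hm := by
    refine @Measure.ext Ω m _ _ fun s hs => ?_
    rw [trim_measurableSet_eq hm hs, trim_measurableSet_eq hm hs,
      withDensity_apply _ (hm s hs), withDensity_apply _ (hm s hs),
      setLIntegral_condLExp hm P f hs]
  have h := congrArg (fun ν : @Measure Ω m => ∫⁻ ω, g ω ∂ν) key
  simp only [lintegral_trim hm hg] at h
  rwa [lintegral_withDensity_eq_lintegral_mul _ hf (hg.mono hm le_rfl),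
    lintegral_withDensity_eq_lintegral_mul _ hf' (hg.mono hm le_rfl)] at h

/-- Reweighting the event `{T = j}` by the inverse propensity score `1 / p` recovers the
unconditional law of the potential outcome. -/
lemma map_withDensity_ipw {Ω : Type*} {m mΩ : MeasurableSpace Ω} [StandardBorelSpace Ω]
    (hm : m ≤ mΩ) (P : Measure Ω) [IsFiniteMeasure P]
    {T : Ω → ℕ} (hT : Measurable T) {Y : Ω → ℝ} (hY : Measurable Y)
    (hind : CondIndepFun m hm T Y P) (j : ℕ) {p : Ω → ℝ} (hp : Measurable[m] p)
    (hp0 : ∀ ω, 0 < p ω)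
    (hpc : p =ᵐ[P] P[fun ω => if T ω = j then (1 : ℝ) else 0 | m]) :
    (P.withDensity fun ω => ENNReal.ofReal ((if T ω = j then (1 : ℝ) else 0) / p ω)).map Y
      = P.map Y := by
  have hS : MeasurableSet (T ⁻¹' {j}) := hT (measurableSet_singleton j)
  ext A hA
  have hB : MeasurableSet (Y ⁻¹' A) := hY hA
  have hSB := hS.inter hB
  have hmul := (condIndepFun_iff_condExp_inter_preimage_eq_mul hT hY).1 hind {j} A
    (measurableSet_singleton j) hA
  have hSeq : (T ⁻¹' {j}).indicator (fun _ => (1 : ℝ)) = fun ω => if T ω = j then 1 else 0 := by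
    funext ω; by_cases h : T ω = j <;> simp [h]
  rw [hSeq] at hmul
  have hint : ∀ {s : Set Ω}, MeasurableSet s → Integrable (s.indicator fun _ => (1 : ℝ)) P :=
    fun hs => (integrable_const 1).indicator hs
  have hnn : ∀ s : Set Ω, 0 ≤ᵐ[P] s.indicator fun _ => (1 : ℝ) :=
    fun s => .of_forall fun ω => Set.indicator_nonneg (fun _ _ => zero_le_one) ω
  have hm1 : ∀ {s : Set Ω}, MeasurableSet s →
      Measurable fun ω => ENNReal.ofReal (s.indicator (fun _ => (1 : ℝ)) ω) :=
    fun hs => (measurable_const.indicator hs).ennreal_ofReal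
  have hpinv : Measurable[m] fun ω => ENNReal.ofReal (p ω)⁻¹ :=
    ENNReal.measurable_ofReal.comp (measurable_inv.comp hp)
  have hsetInt : ∀ {s : Set Ω}, MeasurableSet s →
      ∫⁻ ω, ENNReal.ofReal (s.indicator (fun _ => (1 : ℝ)) ω) ∂P = P s := by
    intro s hs
    rw [← lintegral_indicator_one hs]
    refine lintegral_congr fun ω => ?_
    by_cases h : ω ∈ s <;> simp [h]
  rw [Measure.map_apply hY hA, Measure.map_apply hY hA, withDensity_apply _ hB]
  calc ∫⁻ ω in Y ⁻¹' A, ENNReal.ofReal ((if T ω = j then (1 : ℝ) else 0) / p ω) ∂P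
      = ∫⁻ ω, ENNReal.ofReal ((T ⁻¹' {j} ∩ Y ⁻¹' A).indicator (fun _ => (1 : ℝ)) ω)
          * ENNReal.ofReal (p ω)⁻¹ ∂P := by
        rw [← lintegral_indicator hB]
        refine lintegral_congr fun ω => ?_
        by_cases h1 : T ω = j <;> by_cases h2 : Y ω ∈ A <;>
          simp [h1, h2]
    _ = ∫⁻ ω, condLExp m P
            (fun ω => ENNReal.ofReal ((T ⁻¹' {j} ∩ Y ⁻¹' A).indicator (fun _ => (1 : ℝ)) ω)) ω
          * ENNReal.ofReal (p ω)⁻¹ ∂P := lintegral_mul_condLExp hm P (hm1 hSB) hpinv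
    _ = ∫⁻ ω, condLExp m P
            (fun ω => ENNReal.ofReal ((Y ⁻¹' A).indicator (fun _ => (1 : ℝ)) ω)) ω ∂P := by
        refine lintegral_congr_ae ?_
        filter_upwards [condLExp_ofReal m (hint hSB) (hnn _),
          condLExp_ofReal m (hint hB) (hnn _), hmul, hpc] with ω h1 h2 h3 h4
        rw [h1, h2, h3, ← h4, ENNReal.ofReal_mul (hp0 ω).le, mul_right_comm,
          ← ENNReal.ofReal_mul (hp0 ω).le, mul_inv_cancel₀ (hp0 ω).ne', ENNReal.ofReal_one,
          one_mul]
    _ = P (Y ⁻¹' A) := by rw [lintegral_condLExp hm, hsetInt hB]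

/-- **Identification of the general treatment model with discrete treatment.**
On a standard Borel probability space, let `T : Ω → {0,…,J}` be a treatment, `Y j : Ω → ℝ`
the potential outcomes, `X : Ω → ℝ^d` covariates, and `Yobs ω := Y (T ω) ω` the observed
outcome.  Assume unconfoundedness (`T ⫫ Y j ∣ σ(X)` for each `j`) and that `e j ∘ X` is a
version of `E[1{T=j} | σ(X)]` with `e j` valued in `(0,1]`.  With the stabilized weight
`π₀ ω := Σ_j 1{T ω = j} · P(T=j)/e j (X ω)`, for all bounded measurable `ℓ₀,…,ℓ_J : ℝ → ℝ`,
`E[π₀ · ℓ_T(Yobs)] = Σ_j P(T=j) · E[ℓ_j(Y j)]`. -/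
theorem discrete_treatment_identification
    {Ω : Type*} [MeasurableSpace Ω] [StandardBorelSpace Ω]
    (P : Measure Ω) [IsProbabilityMeasure P]
    (d J : ℕ)
    (T : Ω → ℕ) (hT_meas : Measurable T) (hT_range : ∀ ω, T ω ≤ J)
    (Y : ℕ → Ω → ℝ) (hY_meas : ∀ j, Measurable (Y j))
    (X : Ω → (Fin d → ℝ)) (hX_meas : Measurable X)
    (hunconf : ∀ j ≤ J,
      CondIndepFun (MeasurableSpace.comap X inferInstance) hX_meas.comap_le T (Y j) P)
    (e : ℕ → (Fin d → ℝ) → ℝ) (he_meas : ∀ j, Measurable (e j))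
    (he_range : ∀ j x, 0 < e j x ∧ e j x ≤ 1)
    (he_condexp : ∀ j ≤ J,
      (fun ω => e j (X ω))
        =ᵐ[P] P[fun ω => if T ω = j then (1 : ℝ) else 0
                  | MeasurableSpace.comap X inferInstance])
    (π₀ : Ω → ℝ)
    (hπ₀ : ∀ ω, π₀ ω = ∑ j ∈ Finset.range (J + 1),
      (if T ω = j then (1 : ℝ) else 0) * (P {ω' | T ω' = j}).toReal / e j (X ω)) :
    ∀ ℓ : ℕ → ℝ → ℝ, (∀ j ≤ J, Measurable (ℓ j)) →
      (∀ j ≤ J, ∃ C, ∀ y, |ℓ j y| ≤ C) →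
      ∫ ω, π₀ ω * ℓ (T ω) (Y (T ω) ω) ∂P
        = ∑ j ∈ Finset.range (J + 1),
            (P {ω' | T ω' = j}).toReal * ∫ ω, ℓ j (Y j ω) ∂P := by
  intro ℓ hℓ_meas hℓ_bdd
  -- The inverse-probability weight of the arm `j`.
  let w : ℕ → Ω → ℝ := fun j ω => (if T ω = j then (1 : ℝ) else 0) / e j (X ω)
  have hw0 : ∀ j ω, 0 ≤ w j ω := fun j ω =>
    div_nonneg (by split_ifs <;> norm_num) (he_range j _).1.le
  have hw_meas : ∀ j, Measurable (w j) := fun j =>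
    (Measurable.ite (hT_meas (measurableSet_singleton j)) measurable_const
      measurable_const).div ((he_meas j).comp hX_meas)
  have hmap : ∀ j ≤ J,
      (P.withDensity fun ω => ENNReal.ofReal (w j ω)).map (Y j) = P.map (Y j) := fun j hj =>
    map_withDensity_ipw hX_meas.comap_le P hT_meas (hY_meas j) (hunconf j hj) j
      ((he_meas j).comp (comap_measurable X)) (fun ω => (he_range j (X ω)).1) (he_condexp j hj)
  -- The two image measures have the same, finite, total mass.
  have hw_int : ∀ j ≤ J, Integrable (w j) P := by
    intro j hj
    refine ⟨(hw_meas j).aestronglyMeasurable, ?_⟩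
    rw [hasFiniteIntegral_iff_ofReal (.of_forall (hw0 j))]
    have h := congrArg (fun ν => ν Set.univ) (hmap j hj)
    simp only [Measure.map_apply (hY_meas j) MeasurableSet.univ, Set.preimage_univ,
      withDensity_apply _ MeasurableSet.univ, Measure.restrict_univ, measure_univ] at h
    rw [h]
    exact ENNReal.one_lt_top
  have harm : ∀ j ≤ J, ∫ ω, w j ω * ℓ j (Y j ω) ∂P = ∫ ω, ℓ j (Y j ω) ∂P := by
    intro j hj
    have h := congrArg (fun ν => ∫ y, ℓ j y ∂ν) (hmap j hj)
    beta_reduce at h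
    rw [integral_map (hY_meas j).aemeasurable (hℓ_meas j hj).aestronglyMeasurable,
      integral_map (hY_meas j).aemeasurable (hℓ_meas j hj).aestronglyMeasurable,
      integral_withDensity_eq_integral_toReal_smul (hw_meas j).ennreal_ofReal
        (.of_forall fun _ => ENNReal.ofReal_lt_top)] at h
    rw [← h]
    refine integral_congr_ae (.of_forall fun ω => ?_)
    simp [ENNReal.toReal_ofReal (hw0 j ω)]
  have hterm_int : ∀ j ≤ J, Integrable (fun ω => w j ω * ℓ j (Y j ω)) P := by
    intro j hj
    obtain ⟨C, hC⟩ := hℓ_bdd j hj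
    exact (hw_int j hj).mul_bdd
      ((hℓ_meas j hj).comp (hY_meas j)).aestronglyMeasurable (.of_forall fun ω => hC (Y j ω))
  have hpt : ∀ ω, π₀ ω * ℓ (T ω) (Y (T ω) ω) = ∑ j ∈ Finset.range (J + 1),
      (P {ω' | T ω' = j}).toReal * (w j ω * ℓ j (Y j ω)) := by
    intro ω
    rw [hπ₀, Finset.sum_mul]
    refine Finset.sum_congr rfl fun j _ => ?_
    by_cases h : T ω = j
    · subst h
      simp only [w, if_true]
      ring
    · simp [w, h]
  simp_rw [hpt]
  rw [integral_finsetSum _ fun j hj =>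
    (hterm_int j (Finset.mem_range_succ_iff.1 hj)).const_mul _]
  refine Finset.sum_congr rfl fun j hj => ?_
  rw [integral_const_mul, harm j (Finset.mem_range_succ_iff.1 hj)]
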